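/- arXiv:1404.1106 — 2 statements merged into one kernel-verified Lean document; each statement's English description precedes it below -/
import Mathlib

section
/- For every integer k ≥ 0, ∫_{−1}^{1} (2 − 2t)^{1/2} P_k'(t) dt = 2(−1)^{k+1} + 2/(2k+1). -/
/-- `C` is the family of Gegenbauer (ultraspherical) polynomials with parameter `α`,
characterized by the generating function `(1 - 2rt + r²)^(-α) = Σ_k C_k^α(t) r^k`
for `t ∈ [-1, 1]` and `|r|` small. -/
def IsGegenbauer (α : ℝ) (C : ℕ → Polynomial ℝ) : Prop :=
  ∀ t ∈ Set.Icc (-1:ℝ) 1, ∀ r : ℝ, |r| < 1/2 →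
    HasSum (fun k : ℕ => (C k).eval t * r ^ k) ((1 - 2*r*t + r^2) ^ (-α))

/-- The Legendre polynomials are the Gegenbauer polynomials with parameter `1/2`. -/
def IsLegendre (P : ℕ → Polynomial ℝ) : Prop := IsGegenbauer (1/2) P

/-!
For fixed `t`, the generating function `g(r) = (1 - 2rt + r²)^(-α)` solves
`(1 - 2rt + r²) g' = 2α (t - r) g`; comparing Maclaurin coefficients gives the three-term
recurrence, and hence the differential relations, of the Gegenbauer polynomials.

The weight disappears under `t = 1 - s²/2`, since then `(2 - 2t)^(1/2) = s`. In this variable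
`s ↦ s p(1 - s²/2)` is a primitive of `(p - 2(1 - t) p')(1 - s²/2)`. Taking `p = P_k` expresses the
wanted integral through `J_k = ∫₀² P_k(1 - s²/2) ds`. For `p = P_{k+1} + P_k`, which vanishes at
`-1`, one has `p - 2(1 - t) p' = (2k+3) P_{k+1} - (2k+1) P_k`, so `(2k+1) J_k` does not depend
on `k`.
-/

section EulerOperator

open PowerSeries

lemma coeff_X_mul_derivative {R : Type*} [CommSemiring R] (f : R⟦X⟧) (n : ℕ) :
    coeff n (X * d⁄dX R f) = n * coeff n f := by
  cases n with
  | zero => simp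
  | succ n => rw [coeff_succ_X_mul, coeff_derivative, mul_comm, Nat.cast_succ]

end EulerOperator

section Maclaurin

open Filter Topology PowerSeries
open scoped ContDiff Nat

variable {𝕜 : Type*} [NontriviallyNormedField 𝕜]

/-- The Maclaurin series of a function, as a formal power series; its coefficients are read off the
iterated derivatives at `0` whether or not the series converges. -/
noncomputable def maclaurinSeries (f : 𝕜 → 𝕜) : 𝕜⟦X⟧ :=
  PowerSeries.mk fun n => iteratedDeriv n f 0 / n !

lemma coeff_maclaurinSeries (f : 𝕜 → 𝕜) (n : ℕ) :
    coeff n (maclaurinSeries f) = iteratedDeriv n f 0 / n ! :=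
  coeff_mk n _

lemma maclaurinSeries_congr {f g : 𝕜 → 𝕜} (h : f =ᶠ[𝓝 0] g) :
    maclaurinSeries f = maclaurinSeries g := by
  ext n
  rw [coeff_maclaurinSeries, coeff_maclaurinSeries, h.iteratedDeriv_eq n]

variable [CharZero 𝕜]

lemma maclaurinSeries_deriv (f : 𝕜 → 𝕜) :
    maclaurinSeries (deriv f) = d⁄dX 𝕜 (maclaurinSeries f) := by
  ext n
  rw [coeff_derivative, coeff_maclaurinSeries, coeff_maclaurinSeries, iteratedDeriv_succ',
    Nat.factorial_succ]
  push_cast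
  field_simp

lemma maclaurinSeries_mul {f g : 𝕜 → 𝕜} (hf : ContDiffAt 𝕜 ∞ f 0) (hg : ContDiffAt 𝕜 ∞ g 0) :
    maclaurinSeries (f * g) = maclaurinSeries f * maclaurinSeries g := by
  ext n
  have hn : (n : WithTop ℕ∞) ≤ ∞ := mod_cast le_top
  simp only [coeff_maclaurinSeries, iteratedDeriv_mul (hf.of_le hn) (hg.of_le hn), coeff_mul,
    Finset.Nat.sum_antidiagonal_eq_sum_range_succ_mk, Finset.sum_div]
  refine Finset.sum_congr rfl fun i hi => ?_
  have hfac : (n ! : 𝕜) ≠ 0 := mod_cast n.factorial_ne_zero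
  rw [Nat.cast_choose 𝕜 (Finset.mem_range_succ_iff.mp hi)]
  field_simp

variable [CompleteSpace 𝕜]

lemma maclaurinSeries_eq_mk {f : 𝕜 → 𝕜} {a : ℕ → 𝕜}
    (h : ∀ᶠ z in 𝓝 0, HasSum (fun n => a n * z ^ n) (f z)) :
    maclaurinSeries f = PowerSeries.mk a := by
  have hf : HasFPowerSeriesAt f (.ofScalars 𝕜 a) 0 := by
    simpa [hasFPowerSeriesAt_iff, mul_comm] using h
  ext n
  simpa [coeff_maclaurinSeries] using
    congr(($(hf.analyticAt.hasFPowerSeriesAt.eq_formalMultilinearSeries hf)).coeff n)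

lemma maclaurinSeries_eval (p : Polynomial 𝕜) : maclaurinSeries (fun z => p.eval z) = p := by
  rw [maclaurinSeries_eq_mk (a := p.coeff) (.of_forall fun z => ?_)]
  · ext n
    simp
  · rw [Polynomial.eval_eq_sum]
    exact hasSum_sum_of_ne_finset_zero fun n hn => by simp_all

end Maclaurin

section GeneratingFunction

open Filter Topology PowerSeries
open scoped ContDiff Polynomial

/-- The generating function `r ↦ (1 - 2rt + r²)^(-α)` of the values at `t` of the Gegenbauer
polynomials with parameter `α`. -/
noncomputable def gegenbauerGenFun (α t r : ℝ) : ℝ := (1 - 2 * r * t + r ^ 2) ^ (-α)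

lemma analyticAt_gegenbauerGenFun (α t : ℝ) : AnalyticAt ℝ (gegenbauerGenFun α t) 0 := by
  have h : ContDiffAt ℝ ω (fun r : ℝ => 1 - 2 * r * t + r ^ 2) 0 := by fun_prop
  exact (h.rpow_const_of_ne (by norm_num)).analyticAt

lemma eventually_mul_deriv_gegenbauerGenFun (α t : ℝ) :
    ∀ᶠ r : ℝ in 𝓝 0, (1 - 2 * r * t + r ^ 2) * deriv (gegenbauerGenFun α t) r =
      2 * α * (t - r) * gegenbauerGenFun α t r := by
  have hcont : ContinuousAt (fun r : ℝ => 1 - 2 * r * t + r ^ 2) 0 := by fun_prop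
  filter_upwards [hcont.eventually_ne (by norm_num : _ ≠ (0 : ℝ))] with r hr
  have hbase : HasDerivAt (fun r : ℝ => 1 - 2 * r * t + r ^ 2) (2 * (r - t)) r := by
    convert! ((((hasDerivAt_id r).const_mul 2).mul_const t).const_sub 1).add (hasDerivAt_pow 2 r)
      using 1
    ring
  have hderiv : HasDerivAt (gegenbauerGenFun α t) _ r := hbase.rpow_const (p := -α) (.inl hr)
  rw [hderiv.deriv, Real.rpow_sub_one hr, gegenbauerGenFun]
  field_simp
  ring

lemma mul_derivative_maclaurinSeries_gegenbauerGenFun (α t : ℝ) :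
    (1 - C (2 * t) * X + X ^ 2) * d⁄dX ℝ (maclaurinSeries (gegenbauerGenFun α t)) =
      C (2 * α) * (C t - X) * maclaurinSeries (gegenbauerGenFun α t) := by
  set g := gegenbauerGenFun α t
  have hg : AnalyticAt ℝ g 0 := analyticAt_gegenbauerGenFun α t
  let p : ℝ[X] := 1 - Polynomial.C (2 * t) * Polynomial.X + Polynomial.X ^ 2
  let q : ℝ[X] := Polynomial.C (2 * α) * (Polynomial.C t - Polynomial.X)
  have hode : (fun r => p.eval r) * deriv g =ᶠ[𝓝 0] (fun r => q.eval r) * g := by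
    filter_upwards [eventually_mul_deriv_gegenbauerGenFun α t] with r hr
    simp only [p, q, Pi.mul_apply, Polynomial.eval_add, Polynomial.eval_sub, Polynomial.eval_mul,
      Polynomial.eval_one, Polynomial.eval_C, Polynomial.eval_X, Polynomial.eval_pow]
    linear_combination hr
  have hseries := maclaurinSeries_congr hode
  have hpoly (p : ℝ[X]) : ContDiffAt ℝ ∞ (fun r => p.eval r) 0 :=
    (AnalyticOnNhd.eval_polynomial p 0 trivial).contDiffAt
  rw [maclaurinSeries_mul (hpoly p) hg.deriv.contDiffAt,
    maclaurinSeries_mul (hpoly q) hg.contDiffAt,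
    maclaurinSeries_deriv, maclaurinSeries_eval, maclaurinSeries_eval] at hseries
  simpa [p, q] using hseries

end GeneratingFunction

section Recurrence

open Polynomial

lemma eq_of_eval_eq_on_Icc {a b : ℝ} (hab : a < b) {p q : ℝ[X]}
    (h : ∀ t ∈ Set.Icc a b, p.eval t = q.eval t) : p = q :=
  eq_of_infinite_eval_eq p q ((Set.Icc_infinite hab).mono h)

namespace IsGegenbauer

variable {α : ℝ} {P : ℕ → ℝ[X]} (hP : IsGegenbauer α P)
include hP

lemma maclaurinSeries_gegenbauerGenFun {t : ℝ} (ht : t ∈ Set.Icc (-1 : ℝ) 1) :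
    maclaurinSeries (gegenbauerGenFun α t) = PowerSeries.mk fun k => (P k).eval t := by
  apply maclaurinSeries_eq_mk
  filter_upwards [eventually_abs_sub_lt 0 (one_half_pos (α := ℝ))] with r hr
  exact hP t ht r (by simpa using hr)

lemma apply_zero : P 0 = 1 := by
  refine eq_of_eval_eq_on_Icc (neg_lt_self one_pos) fun t ht => ?_
  have h := congr(PowerSeries.coeff 0 $(hP.maclaurinSeries_gegenbauerGenFun ht))
  simpa [coeff_maclaurinSeries, gegenbauerGenFun] using h.symm

lemma apply_one : P 1 = C (2 * α) * X := by
  refine eq_of_eval_eq_on_Icc (neg_lt_self one_pos) fun t ht => ?_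
  have h := congr(PowerSeries.coeff 0 $(mul_derivative_maclaurinSeries_gegenbauerGenFun α t))
  rw [hP.maclaurinSeries_gegenbauerGenFun ht] at h
  simp only [add_mul, sub_mul, one_mul, mul_sub, mul_assoc, pow_two, map_add, map_sub,
    PowerSeries.coeff_C_mul, PowerSeries.coeff_zero_X_mul, PowerSeries.coeff_derivative,
    PowerSeries.coeff_mk, hP.apply_zero, eval_one, eval_mul, eval_C, eval_X] at h ⊢
  linear_combination h

lemma three_term_recurrence (k : ℕ) :
    C (k + 2 : ℝ) * P (k + 2) = C (2 * (k + 1 + α)) * X * P (k + 1) - C (k + 2 * α) * P k := by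
  refine eq_of_eval_eq_on_Icc (neg_lt_self one_pos) fun t ht => ?_
  have h := congr(PowerSeries.coeff (k + 1) $(mul_derivative_maclaurinSeries_gegenbauerGenFun α t))
  rw [hP.maclaurinSeries_gegenbauerGenFun ht] at h
  simp only [add_mul, sub_mul, one_mul, mul_sub, mul_assoc, pow_two, map_add, map_sub,
    PowerSeries.coeff_C_mul, PowerSeries.coeff_succ_X_mul, coeff_X_mul_derivative,
    PowerSeries.coeff_derivative, PowerSeries.coeff_mk, Nat.cast_add, Nat.cast_one] at h
  simp only [eval_sub, eval_mul, eval_C, eval_X]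
  linear_combination h

lemma derivative_succ_and_X_mul_derivative_succ (k : ℕ) :
    derivative (P (k + 1)) = X * derivative (P k) + C (k + 2 * α) * P k ∧
      X * derivative (P (k + 1)) - derivative (P k) = C (k + 1 : ℝ) * P (k + 1) := by
  induction k with
  | zero => simp [hP.apply_zero, hP.apply_one, mul_comm]
  | succ k ih =>
    obtain ⟨ih_step, ih_X⟩ := ih
    have hne : C (k + 2 : ℝ) ≠ 0 := C_ne_zero.mpr (by positivity)
    have hrec := hP.three_term_recurrence k
    have hrec' := congr(derivative $hrec)
    simp only [derivative_sub, derivative_mul, derivative_C, derivative_X] at hrec'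
    simp only [C_add, C_mul, C_1, map_natCast, map_ofNat, Nat.cast_add, Nat.cast_one]
      at hne hrec hrec' ih_step ih_X ⊢
    have hstep : derivative (P (k + 2)) =
        X * derivative (P (k + 1)) + ((k : ℝ[X]) + 1 + 2 * C α) * P (k + 1) := by
      refine mul_left_cancel₀ hne ?_
      linear_combination hrec' + ((k : ℝ[X]) + 2 * C α) * ih_X
    refine ⟨hstep, ?_⟩
    linear_combination X * hstep - hrec + X * ih_X - ih_step

lemma one_sub_X_mul_derivative_add (k : ℕ) :
    (1 - X) * derivative (P (k + 1) + P k) = C (k + 2 * α) * P k - C (k + 1 : ℝ) * P (k + 1) := by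
  obtain ⟨hstep, hX⟩ := hP.derivative_succ_and_X_mul_derivative_succ k
  rw [derivative_add]
  linear_combination hstep - hX

end IsGegenbauer

namespace IsLegendre

variable {P : ℕ → ℝ[X]} (hP : IsLegendre P)
include hP

lemma one_sub_X_mul_derivative_add (k : ℕ) :
    (1 - X) * derivative (P (k + 1) + P k) = C (k + 1 : ℝ) * (P k - P (k + 1)) := by
  rw [IsGegenbauer.one_sub_X_mul_derivative_add hP, mul_div_cancel₀ 1 two_ne_zero, mul_sub]

lemma eval_neg_one (k : ℕ) : (P k).eval (-1) = (-1) ^ k := by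
  induction k using Nat.twoStepInduction with
  | zero => simp [IsGegenbauer.apply_zero hP]
  | one => simp [IsGegenbauer.apply_one hP]
  | more k ih₀ ih₁ =>
    have hrec := congr(eval (-1) $(IsGegenbauer.three_term_recurrence hP k))
    simp only [eval_sub, eval_mul, eval_C, eval_X, ih₀, ih₁] at hrec
    have hne : (k : ℝ) + 2 ≠ 0 := by positivity
    refine mul_left_cancel₀ hne ?_
    linear_combination hrec

end IsLegendre

end Recurrence

section Integrals

open Polynomial

lemma hasDerivAt_one_sub_sq_div_two (s : ℝ) : HasDerivAt (fun s : ℝ => 1 - s ^ 2 / 2) (-s) s :=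
  (((hasDerivAt_pow 2 s).div_const 2).const_sub 1).congr_deriv (by push_cast; ring)

lemma integral_eq_integral_mul_comp_one_sub_sq {f : ℝ → ℝ} (hf : Continuous f) (a : ℝ) :
    ∫ t in (1 - a ^ 2 / 2)..1, f t = ∫ s in 0..a, s * f (1 - s ^ 2 / 2) := by
  have hsub := intervalIntegral.integral_comp_mul_deriv (a := 0) (b := a)
    (fun s _ => hasDerivAt_one_sub_sq_div_two s) (by fun_prop) hf
  rw [intervalIntegral.integral_symm]
  simpa [mul_comm, neg_eq_iff_eq_neg] using hsub.symm

lemma integral_rpow_half_mul_eq_integral_sq_mul {f : ℝ → ℝ} (hf : Continuous f)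
    {a : ℝ} (ha : 0 ≤ a) :
    ∫ t in (1 - a ^ 2 / 2)..1, (2 - 2 * t) ^ (1 / 2 : ℝ) * f t =
      ∫ s in 0..a, s ^ 2 * f (1 - s ^ 2 / 2) := by
  simp only [← Real.sqrt_eq_rpow]
  rw [integral_eq_integral_mul_comp_one_sub_sq (by fun_prop)]
  refine intervalIntegral.integral_congr fun s hs => ?_
  have hs_nonneg : 0 ≤ s := (Set.uIcc_of_le ha ▸ hs).1
  have hweight : √(2 - 2 * (1 - s ^ 2 / 2)) = s := by
    rw [show 2 - 2 * (1 - s ^ 2 / 2) = s ^ 2 by ring, Real.sqrt_sq hs_nonneg]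
  simp only [hweight]
  ring

lemma integral_eval_sub_derivative (p : ℝ[X]) (a : ℝ) :
    ∫ s in 0..a, (p - 2 * (1 - X) * derivative p).eval (1 - s ^ 2 / 2) =
      a * p.eval (1 - a ^ 2 / 2) := by
  have hprim (s : ℝ) : HasDerivAt (fun s : ℝ => s * p.eval (1 - s ^ 2 / 2))
      ((p - 2 * (1 - X) * derivative p).eval (1 - s ^ 2 / 2)) s := by
    refine ((hasDerivAt_id s).mul
      ((p.hasDerivAt _).comp s (hasDerivAt_one_sub_sq_div_two s))).congr_deriv ?_
    simp only [Function.comp_apply, id_eq, eval_sub, eval_mul, eval_ofNat, eval_one, eval_X]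
    ring
  rw [intervalIntegral.integral_eq_sub_of_hasDerivAt (fun s _ => hprim s)
    (Continuous.intervalIntegrable (by fun_prop) 0 a)]
  simp

lemma integral_rpow_half_mul_derivative (p : ℝ[X]) {a : ℝ} (ha : 0 ≤ a) :
    ∫ t in (1 - a ^ 2 / 2)..1, (2 - 2 * t) ^ (1 / 2 : ℝ) * (derivative p).eval t =
      (∫ s in 0..a, p.eval (1 - s ^ 2 / 2)) - a * p.eval (1 - a ^ 2 / 2) := by
  rw [integral_rpow_half_mul_eq_integral_sq_mul (derivative p).continuous ha,
    ← integral_eval_sub_derivative, ← intervalIntegral.integral_sub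
      (Continuous.intervalIntegrable (by fun_prop) 0 a)
      (Continuous.intervalIntegrable (by fun_prop) 0 a)]
  refine intervalIntegral.integral_congr fun s _ => ?_
  simp only [eval_sub, eval_mul, eval_ofNat, eval_one, eval_X]
  ring

lemma IsLegendre.integral_eval_one_sub_sq {P : ℕ → ℝ[X]} (hP : IsLegendre P) (k : ℕ) :
    ∫ s in (0 : ℝ)..2, (P k).eval (1 - s ^ 2 / 2) = 2 / (2 * k + 1) := by
  rw [eq_div_iff (by positivity), mul_comm]
  induction k with
  | zero => simp [IsGegenbauer.apply_zero hP]
  | succ k ih =>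
    have hcomb : P (k + 1) + P k - 2 * (1 - X) * derivative (P (k + 1) + P k) =
        C (2 * k + 3 : ℝ) * P (k + 1) - C (2 * k + 1 : ℝ) * P k := by
      rw [mul_assoc, hP.one_sub_X_mul_derivative_add]
      simp only [map_add, map_mul, map_natCast, map_ofNat, map_one]
      ring
    have htel := integral_eval_sub_derivative (P (k + 1) + P k) 2
    have hint (p : ℝ[X]) (c : ℝ) : IntervalIntegrable (fun s : ℝ => c * p.eval (1 - s ^ 2 / 2))
        MeasureTheory.volume 0 2 := Continuous.intervalIntegrable (by fun_prop) 0 2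
    simp only [hcomb, eval_sub, eval_add, eval_mul, eval_C] at htel
    rw [intervalIntegral.integral_sub (hint _ _) (hint _ _), intervalIntegral.integral_const_mul,
      intervalIntegral.integral_const_mul, ih, show (1 : ℝ) - 2 ^ 2 / 2 = -1 by norm_num,
      hP.eval_neg_one, hP.eval_neg_one] at htel
    push_cast
    linear_combination htel

end Integrals

theorem legendre_deriv_weighted_integral (P : ℕ → Polynomial ℝ) (hP : IsLegendre P) (k : ℕ) :
    ∫ t in (-1:ℝ)..1, (2 - 2*t) ^ ((1:ℝ)/2) * (Polynomial.derivative (P k)).eval t =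
      2 * (-1 : ℝ) ^ (k + 1) + 2 / (2 * (k : ℝ) + 1) := by
  have hnode : (1 : ℝ) - 2 ^ 2 / 2 = -1 := by norm_num
  have hparts := integral_rpow_half_mul_derivative (P k) zero_le_two
  rw [hnode, hP.integral_eval_one_sub_sq, hP.eval_neg_one] at hparts
  rw [hparts]
  ring
end

section
/- For every integer k ≥ 0, define Λ_k(φ₆) = ω₄ ∫_{−1}^{1} (C_k^2(t)/C_k^2(1)) φ₆(t)(1−t²)^{3/2} dt with φ₆(t) = 4(1−t)^{1/2}(1+t)^{3/2}. Then (1/(4ω₄))·binom(k+3,3)·Λ_k(φ₆) equals −8(k+2)/((k−1)(k+1)(k+3)(k+5)) for k even and −8(k+1)(k+3)/(k(k−2)(k+2)(k+4)(k+6)) for k odd. In particular Λ₀(φ₆) > 0, Λ₁(φ₆) > 0, and Λ_k(φ₆) < 0 for all k ≥ 2. -/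
/-- The weight `φ₆(t) = 4 (1-t)^{1/2} (1+t)^{3/2}`. -/
noncomputable def phi6 (t : ℝ) : ℝ := 4 * Real.sqrt (1 - t) * (1 + t) ^ ((3:ℝ)/2)

/-- The Funk–Hecke coefficient `Λ_k(φ₆)` in dimension `d = 6`, with `ω₄ = 8π²/3`. -/
noncomputable def Lambda6 (C : ℕ → Polynomial ℝ) (k : ℕ) : ℝ :=
  (8 * Real.pi ^ 2 / 3) *
    ∫ t in (-1:ℝ)..1, ((C k).eval t / (C k).eval 1) * phi6 t * (1 - t^2) ^ ((3:ℝ)/2)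

/-!
Since `φ₆(t) (1 - t²)^{3/2} = 4 (1 - t)² (1 + t)³`, the coefficient `Λ_k` is a moment of `C_k²`
against a polynomial weight `w`. With `Q = 1 - 2tr + r²`, the generating function `Q⁻¹` of the
Chebyshev polynomials `U_k` becomes `2 r Q⁻²` upon differentiation in `t`, so that
`2 C_k² = U_{k+1}'`, a multiple of `T_{k+2}''`. The weight has double zeros at `±1`, so two
integrations by parts turn the moment into `∫ T_{k+2} w''`, where
`w'' = 2 T₀ + 3 T₁ + 6 T₂ + 5 T₃`, and the integrals `∫ T_m T_n` are elementary.
-/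

open Polynomial Polynomial.Chebyshev Topology
open scoped Nat

section CoefficientwiseDerivation

variable {R A : Type*} [CommRing R] [CommRing A] [Algebra R A] (d : Derivation R A A)

/-- The derivation of `A⟦X⟧` that applies a derivation `d` of `A` to every coefficient; it plays the
role of `∂/∂t` on generating functions `∑ₖ Cₖ(t) rᵏ`. -/
noncomputable def coefficientwiseDerivation : Derivation R (PowerSeries A) (PowerSeries A) :=
  Derivation.mk'
    { toFun := fun f => PowerSeries.mk fun k => d (PowerSeries.coeff k f)
      map_add' := fun f g => by ext; simp
      map_smul' := fun c f => by ext; simp }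
    fun f g => by
      ext k
      simp only [LinearMap.coe_mk, AddHom.coe_mk, PowerSeries.coeff_mk, smul_eq_mul, map_add,
        PowerSeries.coeff_mul, map_sum, Derivation.leibniz, Finset.sum_add_distrib]
      congr 1
      exact Finset.Nat.sum_antidiagonal_swap (n := k)
        (f := fun p => PowerSeries.coeff p.1 g * d (PowerSeries.coeff p.2 f))

@[simp]
lemma coeff_coefficientwiseDerivation (f : PowerSeries A) (k : ℕ) :
    PowerSeries.coeff k (coefficientwiseDerivation d f) = d (PowerSeries.coeff k f) := by
  simp [coefficientwiseDerivation]

lemma coefficientwiseDerivation_mk (f : ℕ → A) :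
    coefficientwiseDerivation d (PowerSeries.mk f) = PowerSeries.mk fun k => d (f k) := by
  ext k
  simp

@[simp]
lemma coefficientwiseDerivation_C (a : A) :
    coefficientwiseDerivation d (PowerSeries.C a) = PowerSeries.C (d a) := by
  ext k
  simp [PowerSeries.coeff_C, apply_ite d]

@[simp]
lemma coefficientwiseDerivation_X : coefficientwiseDerivation d PowerSeries.X = 0 := by
  ext k
  simp [PowerSeries.coeff_X, apply_ite d]

end CoefficientwiseDerivation

lemma hasSum_coeff_X_mul {R : Type*} [CommRing R] [TopologicalSpace R] [IsTopologicalRing R]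
    {f : PowerSeries R} {r s : R} (h : HasSum (fun k => PowerSeries.coeff k f * r ^ k) s) :
    HasSum (fun k => PowerSeries.coeff k (PowerSeries.X * f) * r ^ k) (r * s) := by
  suffices HasSum (fun k => PowerSeries.coeff (k + 1) (PowerSeries.X * f) * r ^ (k + 1)) (r * s) by
    simpa using (hasSum_nat_add_iff (f := fun k =>
      PowerSeries.coeff k (PowerSeries.X * f) * r ^ k) 1).mp this
  convert! h.mul_left r using 2 with k
  rw [PowerSeries.coeff_succ_X_mul]
  ring

lemma eq_of_hasSum_mul_pow {𝕜 : Type*} [NontriviallyNormedField 𝕜] {a b : ℕ → 𝕜} {f : 𝕜 → 𝕜}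
    (ha : ∀ᶠ r in 𝓝 0, HasSum (fun k => a k * r ^ k) (f r))
    (hb : ∀ᶠ r in 𝓝 0, HasSum (fun k => b k * r ^ k) (f r)) : a = b := by
  have hasFPowerSeriesAt {c : ℕ → 𝕜} (hc : ∀ᶠ r in 𝓝 0, HasSum (fun k => c k * r ^ k) (f r)) :
      HasFPowerSeriesAt f (FormalMultilinearSeries.ofScalars 𝕜 c) 0 := by
    rw [hasFPowerSeriesAt_iff]
    filter_upwards [hc] with r hr
    simpa [FormalMultilinearSeries.coeff_ofScalars, mul_comm] using hr
  have := (hasFPowerSeriesAt ha).eq_formalMultilinearSeries (hasFPowerSeriesAt hb)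
  funext k
  simpa [FormalMultilinearSeries.coeff_ofScalars] using congrArg (fun p => p.coeff k) this

section GegenbauerDenominator

variable (R : Type*) [CommRing R]

/-- The quadratic `1 - 2tr + r²`, as a power series in `r` over the polynomials in `t`: the
generating function of the Gegenbauer polynomials with parameter `α` is its power `-α`. -/
noncomputable def gegenbauerDenominator : PowerSeries R[X] :=
  1 - PowerSeries.C (2 * X) * PowerSeries.X + PowerSeries.X ^ 2

lemma map_eval_gegenbauerDenominator (t : R) :
    PowerSeries.map (evalRingHom t) (gegenbauerDenominator R) =
      1 - PowerSeries.C (2 * t) * PowerSeries.X + PowerSeries.X ^ 2 := by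
  simp [gegenbauerDenominator]

variable {R} in
lemma gegenbauerDenominator_mul (f : PowerSeries R[X]) :
    gegenbauerDenominator R * f =
      f - PowerSeries.C (2 * X) * (PowerSeries.X * f) + PowerSeries.X * (PowerSeries.X * f) := by
  rw [gegenbauerDenominator]
  ring

lemma gegenbauerDenominator_mul_mk_U :
    gegenbauerDenominator R * PowerSeries.mk (fun k => U R k) = 1 := by
  ext1 k
  rw [gegenbauerDenominator_mul, map_add, map_sub, PowerSeries.coeff_C_mul]
  rcases k with _ | _ | k
  · simp
  · simp [PowerSeries.coeff_succ_X_mul, PowerSeries.coeff_one]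
  · simp only [PowerSeries.coeff_succ_X_mul, PowerSeries.coeff_mk, PowerSeries.coeff_one]
    push_cast
    rw [add_assoc, one_add_one_eq_two, U_add_two]
    simp

lemma coefficientwiseDerivation_gegenbauerDenominator :
    coefficientwiseDerivation derivative' (gegenbauerDenominator R) =
      -PowerSeries.C 2 * PowerSeries.X := by
  have : derivative' (2 * X : R[X]) = 2 := by simp [derivative']
  simp [gegenbauerDenominator, this, mul_comm PowerSeries.X, -map_mul]

lemma gegenbauerDenominator_pow_mul_mk_iterate_derivative_U (n : ℕ) :
    gegenbauerDenominator R ^ (n + 1) * PowerSeries.mk (fun k => derivative^[n] (U R k)) =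
      ((2 ^ n * n ! : ℕ) : PowerSeries R[X]) * PowerSeries.X ^ n := by
  induction n with
  | zero => simpa using gegenbauerDenominator_mul_mk_U R
  | succ n ih =>
    set Q := gegenbauerDenominator R
    have differentiated : Q ^ (n + 1) * PowerSeries.mk (fun k => derivative^[n + 1] (U R k)) =
        2 * ((n : PowerSeries R[X]) + 1) * PowerSeries.X *
          (Q ^ n * PowerSeries.mk fun k => derivative^[n] (U R k)) := by
      have h := congrArg (coefficientwiseDerivation (derivative' (R := R))) ih
      simp only [Derivation.leibniz, Derivation.leibniz_pow, smul_eq_mul, nsmul_eq_mul, Q,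
        coefficientwiseDerivation_gegenbauerDenominator, coefficientwiseDerivation_X, map_ofNat,
        coefficientwiseDerivation_mk, Derivation.map_natCast, add_tsub_cancel_right, mul_zero,
        add_zero, Nat.cast_succ, derivative'_apply, ← Function.iterate_succ_apply'] at h
      linear_combination h
    rw [Nat.factorial_succ]
    push_cast at ih ⊢
    linear_combination Q * differentiated + 2 * (n + 1) * PowerSeries.X * ih

end GegenbauerDenominator

section Gegenbauer

variable {α : ℝ} {C C' : ℕ → ℝ[X]}

lemma IsGegenbauer.unique (hC : IsGegenbauer α C) (hC' : IsGegenbauer α C') : C = C' := by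
  have eventually_abs_lt : ∀ᶠ r : ℝ in 𝓝 0, |r| < 1 / 2 :=
    continuous_abs.continuousAt.eventually_lt continuousAt_const (by norm_num)
  funext k
  refine eq_of_infinite_eval_eq _ _ ((Set.Icc_infinite (by norm_num : (-1 : ℝ) < 1)).mono ?_)
  intro t ht
  exact congrFun (eq_of_hasSum_mul_pow (eventually_abs_lt.mono (hC t ht))
    (eventually_abs_lt.mono (hC' t ht))) k

lemma isGegenbauer_zero : IsGegenbauer 0 fun k => PowerSeries.coeff k 1 := by
  intro t _ r _
  convert hasSum_ite_eq (0 : ℕ) (1 : ℝ) using 1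
  · funext k
    split_ifs with hk <;> simp [PowerSeries.coeff_one, hk]
  · simp

lemma one_sub_two_mul_mul_add_sq_pos {t r : ℝ} (ht : t ∈ Set.Icc (-1) 1) (hr : |r| < 1) :
    0 < 1 - 2 * r * t + r ^ 2 := by
  have ht : t ^ 2 ≤ 1 := sq_le_one_iff_abs_le_one t |>.mpr (abs_le.mpr ht)
  have hr : r ^ 2 < 1 := (sq_lt_one_iff_abs_lt_one r).mpr hr
  nlinarith [sq_nonneg (r - t), sq_nonneg (1 - r * t)]

lemma IsGegenbauer.denominator_mul (hC : IsGegenbauer α C) :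
    IsGegenbauer (α - 1) fun k =>
      PowerSeries.coeff k (gegenbauerDenominator ℝ * PowerSeries.mk C) := by
  intro t ht r hr
  set f := PowerSeries.map (evalRingHom t) (PowerSeries.mk C)
  have hf : HasSum (fun k => PowerSeries.coeff k f * r ^ k) ((1 - 2 * r * t + r ^ 2) ^ (-α)) := by
    simpa [f] using hC t ht r hr
  have hXf := hasSum_coeff_X_mul hf
  convert! (hf.sub (hXf.mul_left (2 * t))).add (hasSum_coeff_X_mul hXf) using 1
  · funext k
    have : (PowerSeries.coeff k (gegenbauerDenominator ℝ * PowerSeries.mk C)).eval t =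
        PowerSeries.coeff k (f - PowerSeries.C (2 * t) * (PowerSeries.X * f) +
          PowerSeries.X * (PowerSeries.X * f)) := by
      rw [← coe_evalRingHom, ← PowerSeries.coeff_map, gegenbauerDenominator_mul]
      simp [f]
    rw [this, map_add, map_sub, PowerSeries.coeff_C_mul]
    ring
  · rw [neg_sub, show 1 - α = -α + 1 by ring, Real.rpow_add_one
      (one_sub_two_mul_mul_add_sq_pos ht (hr.trans (by norm_num))).ne']
    ring

lemma IsGegenbauer.denominator_pow_mul_mk {n : ℕ} (hC : IsGegenbauer n C) :
    gegenbauerDenominator ℝ ^ n * PowerSeries.mk C = 1 := by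
  induction n generalizing C with
  | zero =>
    rw [Nat.cast_zero] at hC
    rw [hC.unique isGegenbauer_zero, pow_zero, one_mul]
    ext1 k
    exact PowerSeries.coeff_mk _ _
  | succ n ih =>
    rw [Nat.cast_succ] at hC
    have mk_coeff (f : PowerSeries ℝ[X]) : PowerSeries.mk (fun k => PowerSeries.coeff k f) = f := by
      ext1 k
      exact PowerSeries.coeff_mk _ _
    have hQC := hC.denominator_mul
    rw [add_sub_cancel_right] at hQC
    rw [pow_succ, mul_assoc, ← ih hQC, mk_coeff]

lemma IsGegenbauer.mul_eq_iterate_derivative_U {n : ℕ} (hC : IsGegenbauer (n + 1 : ℕ) C) (k : ℕ) :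
    ((2 ^ n * n ! : ℕ) : ℝ[X]) * C k = derivative^[n] (U ℝ (k + n : ℕ)) := by
  have h : PowerSeries.mk (fun k => derivative^[n] (U ℝ k)) =
      ((2 ^ n * n ! : ℕ) : PowerSeries ℝ[X]) * (PowerSeries.X ^ n * PowerSeries.mk C) := by
    linear_combination
      PowerSeries.mk C * gegenbauerDenominator_pow_mul_mk_iterate_derivative_U ℝ n -
        PowerSeries.mk (fun k => derivative^[n] (U ℝ k)) * hC.denominator_pow_mul_mk
  have := congrArg (PowerSeries.coeff (k + n)) h
  rw [PowerSeries.coeff_mk, ← map_natCast PowerSeries.C, PowerSeries.coeff_C_mul,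
    PowerSeries.coeff_X_pow_mul, PowerSeries.coeff_mk] at this
  exact this.symm

lemma IsGegenbauer.eval_one {n : ℕ} (hC : IsGegenbauer (n + 1 : ℕ) C) (k : ℕ) :
    (C k).eval 1 = (2 * n + 1 + k).choose (2 * n + 1) := by
  set c := PowerSeries.map (evalRingHom 1) (PowerSeries.mk C) with hc
  set b : PowerSeries ℝ := PowerSeries.mk fun k => ((2 * n + 1 + k).choose (2 * n + 1) : ℝ) with hb
  have hcX : (1 - PowerSeries.X) ^ (2 * n + 2) * c = 1 := by
    have h := congrArg (PowerSeries.map (evalRingHom 1)) hC.denominator_pow_mul_mk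
    have : 1 - PowerSeries.C (2 * 1 : ℝ) * PowerSeries.X + PowerSeries.X ^ 2 =
        (1 - PowerSeries.X) ^ 2 := by
      rw [mul_one, map_ofNat]
      ring
    rwa [map_mul, map_pow, map_eval_gegenbauerDenominator, map_one, this, ← pow_mul] at h
  have hbX : b * (1 - PowerSeries.X) ^ (2 * n + 2) = 1 :=
    PowerSeries.mk_add_choose_mul_one_sub_pow_eq_one ℝ (2 * n + 1)
  have hcb : c = b := by linear_combination b * hcX - c * hbX
  simpa [hc, hb] using congrArg (PowerSeries.coeff k) hcb

end Gegenbauer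

section Integral

/-- The linear functional `p ↦ ∫ₐᵇ p(t) dt` on real polynomials. -/
noncomputable def polynomialIntegral (a b : ℝ) : ℝ[X] →ₗ[ℝ] ℝ where
  toFun p := ∫ t in a..b, p.eval t
  map_add' p q := by
    simp only [eval_add]
    exact intervalIntegral.integral_add (p.continuous.intervalIntegrable a b)
      (q.continuous.intervalIntegrable a b)
  map_smul' c p := by
    simp only [eval_smul, smul_eq_mul, intervalIntegral.integral_const_mul, RingHom.id_apply]

lemma polynomialIntegral_derivative (a b : ℝ) (p : ℝ[X]) :
    polynomialIntegral a b (derivative p) = p.eval b - p.eval a :=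
  intervalIntegral.integral_eq_sub_of_hasDerivAt (fun t _ => p.hasDerivAt t)
    ((derivative p).continuous.intervalIntegrable a b)

lemma polynomialIntegral_iterate_derivative_two_mul {a b : ℝ} (p : ℝ[X]) {q : ℝ[X]}
    (ha : q.IsRoot a) (hb : q.IsRoot b) (ha' : (derivative q).IsRoot a)
    (hb' : (derivative q).IsRoot b) :
    polynomialIntegral a b (derivative^[2] p * q) =
      polynomialIntegral a b (p * derivative^[2] q) := by
  have lagrange_identity : derivative^[2] p * q - p * derivative^[2] q =
      derivative (derivative p * q - p * derivative q) := by
    simp only [Function.iterate_succ_apply, Function.iterate_zero_apply, derivative_sub,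
      derivative_mul]
    ring
  rw [← sub_eq_zero, ← map_sub, lagrange_identity, polynomialIntegral_derivative]
  simp [ha.eq_zero, hb.eq_zero, ha'.eq_zero, hb'.eq_zero]

-- At `n = ±1` the right-hand side is `0 / 0 = 0`, which is the correct value.
lemma polynomialIntegral_T (n : ℤ) :
    polynomialIntegral (-1) 1 (T ℝ n) = (1 + (n.negOnePow : ℤ)) / (1 - (n : ℝ) ^ 2) := by
  have chebyshev_ode : derivative (X * T ℝ n + (1 - X ^ 2) * derivative (T ℝ n)) =
      (1 - (n : ℝ) ^ 2) • T ℝ n := by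
    have h := one_sub_X_sq_mul_derivative_derivative_T_eq_poly_in_T (R := ℝ) n
    rw [Function.iterate_succ_apply, Function.iterate_one] at h
    simp only [derivative_add, derivative_mul, derivative_X, derivative_one,
      derivative_X_pow, smul_eq_C_mul, map_sub, map_one, map_pow, map_intCast, map_natCast]
    push_cast
    linear_combination h
  rcases eq_or_ne (n ^ 2) 1 with hn | hn
  · have T_eq_X : T ℝ n = X := by rcases sq_eq_one_iff.mp hn with rfl | rfl <;> simp
    have integral_X : polynomialIntegral (-1) 1 X = 0 := by simp [polynomialIntegral]
    have : (n : ℝ) ^ 2 = 1 := by exact_mod_cast hn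
    rw [T_eq_X, integral_X, this, sub_self, div_zero]
  · have h := polynomialIntegral_derivative (-1) 1 (X * T ℝ n + (1 - X ^ 2) * derivative (T ℝ n))
    have hn' : 1 - (n : ℝ) ^ 2 ≠ 0 := sub_ne_zero.mpr (by exact_mod_cast hn.symm)
    rw [eq_div_iff hn', mul_comm, ← smul_eq_mul, ← map_smul, ← chebyshev_ode, h]
    simp [-Int.coe_negOnePow]

lemma polynomialIntegral_T_of_even {n : ℤ} (hn : Even n) :
    polynomialIntegral (-1) 1 (T ℝ n) = 2 / (1 - (n : ℝ) ^ 2) := by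
  rw [polynomialIntegral_T, Int.negOnePow_even n hn]
  norm_num

lemma polynomialIntegral_T_of_odd {n : ℤ} (hn : Odd n) :
    polynomialIntegral (-1) 1 (T ℝ n) = 0 := by
  simp [polynomialIntegral_T, Int.negOnePow_odd n hn]

lemma two_mul_polynomialIntegral_T_mul_T (m n : ℤ) :
    2 * polynomialIntegral (-1) 1 (T ℝ m * T ℝ n) =
      polynomialIntegral (-1) 1 (T ℝ (m + n)) + polynomialIntegral (-1) 1 (T ℝ (m - n)) := by
  rw [← map_add, ← T_mul_T, ← smul_eq_mul, ← map_smul, smul_eq_C_mul, map_ofNat, mul_assoc]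

lemma polynomialIntegral_T_mul_T_of_even {m n : ℤ} (h : Even (m + n)) :
    polynomialIntegral (-1) 1 (T ℝ m * T ℝ n) =
      1 / (1 - (m + n : ℝ) ^ 2) + 1 / (1 - (m - n : ℝ) ^ 2) := by
  have := two_mul_polynomialIntegral_T_mul_T m n
  rw [polynomialIntegral_T_of_even h, polynomialIntegral_T_of_even (by grind)] at this
  push_cast at this
  linear_combination this / 2

lemma polynomialIntegral_T_mul_T_of_odd {m n : ℤ} (h : Odd (m + n)) :
    polynomialIntegral (-1) 1 (T ℝ m * T ℝ n) = 0 := by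
  have := two_mul_polynomialIntegral_T_mul_T m n
  rw [polynomialIntegral_T_of_odd h, polynomialIntegral_T_of_odd (by grind)] at this
  linarith

end Integral

section FunkHecke

/-- The polynomial `(1 - t)² (1 + t)³`, which is `φ₆(t) (1 - t²)^{3/2} / 4` on `[-1, 1]`. -/
noncomputable def funkHeckeWeight : ℝ[X] := (1 - X) ^ 2 * (1 + X) ^ 3

lemma phi6_mul_rpow {t : ℝ} (ht : t ∈ Set.Icc (-1) 1) :
    phi6 t * (1 - t ^ 2) ^ ((3 : ℝ) / 2) = 4 * funkHeckeWeight.eval t := by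
  have hsub : 0 ≤ 1 - t := by linarith [ht.2]
  have hadd : 0 ≤ 1 + t := by linarith [ht.1]
  have pow_two : (1 - t) ^ ((1 : ℝ) / 2) * (1 - t) ^ ((3 : ℝ) / 2) = (1 - t) ^ 2 := by
    rw [← Real.rpow_add_of_nonneg hsub (by norm_num) (by norm_num), ← Real.rpow_natCast]
    norm_num
  have pow_three : (1 + t) ^ ((3 : ℝ) / 2) * (1 + t) ^ ((3 : ℝ) / 2) = (1 + t) ^ 3 := by
    rw [← Real.rpow_add_of_nonneg hadd (by norm_num) (by norm_num), ← Real.rpow_natCast]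
    norm_num
  rw [phi6, show 1 - t ^ 2 = (1 - t) * (1 + t) by ring, Real.mul_rpow hsub hadd,
    Real.sqrt_eq_rpow, funkHeckeWeight, eval_mul, eval_pow, eval_pow, eval_sub, eval_add, eval_one,
    eval_X, ← pow_two, ← pow_three]
  ring

lemma iterate_derivative_two_funkHeckeWeight :
    derivative^[2] funkHeckeWeight =
      (2 : ℝ) • T ℝ 0 + (3 : ℝ) • T ℝ 1 + (6 : ℝ) • T ℝ 2 + (5 : ℝ) • T ℝ 3 := by
  have T_three : T ℝ 3 = 4 * X ^ 3 - 3 * X := by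
    rw [show (3 : ℤ) = 1 + 2 by norm_num, T_add_two, show (1 : ℤ) + 1 = 2 by norm_num, T_two, T_one]
    ring
  rw [T_zero, T_one, T_two, T_three, funkHeckeWeight]
  simp only [Function.iterate_succ_apply, Function.iterate_zero_apply, derivative_mul,
    derivative_pow, derivative_sub, derivative_add, derivative_one, derivative_X, derivative_zero,
    derivative_natCast, smul_eq_C_mul, map_ofNat, map_natCast]
  push_cast
  ring

lemma polynomialIntegral_iterate_derivative_two_T_mul_funkHeckeWeight (n : ℤ) :
    polynomialIntegral (-1) 1 (derivative^[2] (T ℝ n) * funkHeckeWeight) =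
      2 * polynomialIntegral (-1) 1 (T ℝ n * T ℝ 0) +
      3 * polynomialIntegral (-1) 1 (T ℝ n * T ℝ 1) +
      6 * polynomialIntegral (-1) 1 (T ℝ n * T ℝ 2) +
      5 * polynomialIntegral (-1) 1 (T ℝ n * T ℝ 3) := by
  rw [polynomialIntegral_iterate_derivative_two_mul, iterate_derivative_two_funkHeckeWeight]
  · simp only [mul_add, mul_smul_comm, map_add, map_smul, smul_eq_mul]
  all_goals simp [funkHeckeWeight, derivative_pow]

lemma polynomialIntegral_iterate_derivative_two_T_mul_funkHeckeWeight_of_even {n : ℤ}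
    (hn : Even n) :
    polynomialIntegral (-1) 1 (derivative^[2] (T ℝ n) * funkHeckeWeight) =
      -16 * (n : ℝ) ^ 2 / ((n - 3) * (n - 1) * (n + 1) * (n + 3)) := by
  rw [polynomialIntegral_iterate_derivative_two_T_mul_funkHeckeWeight,
    polynomialIntegral_T_mul_T_of_even (n := 0) (by grind),
    polynomialIntegral_T_mul_T_of_odd (n := 1) (by grind),
    polynomialIntegral_T_mul_T_of_even (n := 2) (by grind),
    polynomialIntegral_T_mul_T_of_odd (n := 3) (by grind)]
  have h₁ : (n : ℝ) - 1 ≠ 0 := by exact_mod_cast (by grind : n - 1 ≠ 0)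
  have h₂ : (n : ℝ) + 1 ≠ 0 := by exact_mod_cast (by grind : n + 1 ≠ 0)
  have h₃ : (n : ℝ) - 3 ≠ 0 := by exact_mod_cast (by grind : n - 3 ≠ 0)
  have h₄ : (n : ℝ) + 3 ≠ 0 := by exact_mod_cast (by grind : n + 3 ≠ 0)
  have factor_zero : 1 - (n : ℝ) ^ 2 = -((n - 1) * (n + 1)) := by ring
  have factor_add_two : 1 - ((n : ℝ) + 2) ^ 2 = -((n + 1) * (n + 3)) := by ring
  have factor_sub_two : 1 - ((n : ℝ) - 2) ^ 2 = -((n - 3) * (n - 1)) := by ring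
  push_cast
  rw [add_zero, sub_zero, factor_zero, factor_add_two, factor_sub_two]
  field_simp
  ring

lemma polynomialIntegral_iterate_derivative_two_T_mul_funkHeckeWeight_of_odd {n : ℤ}
    (hn : Odd n) :
    polynomialIntegral (-1) 1 (derivative^[2] (T ℝ n) * funkHeckeWeight) =
      -16 * ((n - 1) * (n + 1)) / ((n - 4) * (n - 2) * (n + 2) * (n + 4)) := by
  rw [polynomialIntegral_iterate_derivative_two_T_mul_funkHeckeWeight,
    polynomialIntegral_T_mul_T_of_odd (n := 0) (by grind),
    polynomialIntegral_T_mul_T_of_even (n := 1) (by grind),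
    polynomialIntegral_T_mul_T_of_odd (n := 2) (by grind),
    polynomialIntegral_T_mul_T_of_even (n := 3) (by grind)]
  have h₀ : (n : ℝ) ≠ 0 := by exact_mod_cast (by grind : n ≠ 0)
  have h₁ : (n : ℝ) - 2 ≠ 0 := by exact_mod_cast (by grind : n - 2 ≠ 0)
  have h₂ : (n : ℝ) + 2 ≠ 0 := by exact_mod_cast (by grind : n + 2 ≠ 0)
  have h₃ : (n : ℝ) - 4 ≠ 0 := by exact_mod_cast (by grind : n - 4 ≠ 0)
  have h₄ : (n : ℝ) + 4 ≠ 0 := by exact_mod_cast (by grind : n + 4 ≠ 0)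
  have factor_add_one : 1 - ((n : ℝ) + 1) ^ 2 = -(n * (n + 2)) := by ring
  have factor_sub_one : 1 - ((n : ℝ) - 1) ^ 2 = -((n - 2) * n) := by ring
  have factor_add_three : 1 - ((n : ℝ) + 3) ^ 2 = -((n + 2) * (n + 4)) := by ring
  have factor_sub_three : 1 - ((n : ℝ) - 3) ^ 2 = -((n - 4) * (n - 2)) := by ring
  push_cast
  rw [factor_add_one, factor_sub_one, factor_add_three, factor_sub_three]
  field_simp
  ring

variable {C : ℕ → ℝ[X]}

lemma IsGegenbauer.two_mul_add_two_smul (hC : IsGegenbauer 2 C) (k : ℕ) :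
    (2 * (k + 2) : ℝ) • C k = derivative^[2] (T ℝ (k + 2 : ℤ)) := by
  have hC : IsGegenbauer (1 + 1 : ℕ) C := by exact_mod_cast hC
  have h := hC.mul_eq_iterate_derivative_U k
  rw [Function.iterate_succ_apply, Function.iterate_one, T_derivative_eq_U, derivative_intCast_mul,
    show (k + 2 - 1 : ℤ) = (k + 1 : ℕ) by push_cast; ring, ← Function.iterate_one derivative, ← h]
  simp only [smul_eq_C_mul, map_mul, map_add, map_ofNat, map_natCast]
  push_cast [Nat.factorial_one]
  ring

lemma IsGegenbauer.choose_mul_Lambda6 (hC : IsGegenbauer 2 C) (k : ℕ) :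
    1 / (4 * (8 * Real.pi ^ 2 / 3)) * ((k + 3).choose 3 : ℝ) * Lambda6 C k =
      polynomialIntegral (-1) 1 (C k * funkHeckeWeight) := by
  have eval_one : (C k).eval 1 = ((k + 3).choose 3 : ℝ) := by
    have hC : IsGegenbauer (1 + 1 : ℕ) C := by exact_mod_cast hC
    rw [hC.eval_one k, add_comm _ k]
  have choose_ne_zero : ((k + 3).choose 3 : ℝ) ≠ 0 := by
    exact_mod_cast (Nat.choose_pos (Nat.le_add_left 3 k)).ne'
  have integral_eq :
      ∫ t in (-1 : ℝ)..1, (C k).eval t / (C k).eval 1 * phi6 t * (1 - t ^ 2) ^ ((3 : ℝ) / 2) =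
        4 / ((k + 3).choose 3 : ℝ) * polynomialIntegral (-1) 1 (C k * funkHeckeWeight) := by
    rw [← smul_eq_mul, ← map_smul]
    refine intervalIntegral.integral_congr fun t ht => ?_
    rw [Set.uIcc_of_le (by norm_num)] at ht
    simp only [mul_assoc, phi6_mul_rpow ht, eval_one, eval_smul, eval_mul, smul_eq_mul]
    ring
  rw [Lambda6, integral_eq]
  field_simp

/-- The closed form of `binom(k+3,3) Λ_k(φ₆) / (4 ω₄)`. -/
noncomputable def funkHeckeValue (k : ℕ) : ℝ :=
  if Even k then
    -8 * ((k : ℝ) + 2) / (((k : ℝ) - 1) * ((k : ℝ) + 1) * ((k : ℝ) + 3) * ((k : ℝ) + 5))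
  else
    -8 * ((k : ℝ) + 1) * ((k : ℝ) + 3) /
      ((k : ℝ) * ((k : ℝ) - 2) * ((k : ℝ) + 2) * ((k : ℝ) + 4) * ((k : ℝ) + 6))

lemma funkHeckeValue_neg {k : ℕ} (hk : 2 ≤ k) : funkHeckeValue k < 0 := by
  rw [funkHeckeValue]
  split_ifs with heven
  · have : (2 : ℝ) ≤ k := by exact_mod_cast hk
    have : 0 < (k : ℝ) - 1 := by linarith
    exact div_neg_of_neg_of_pos (by linarith) (by positivity)
  · have : (3 : ℝ) ≤ k := by exact_mod_cast (by grind : 3 ≤ k)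
    have : 0 < (k : ℝ) - 2 := by linarith
    exact div_neg_of_neg_of_pos (by nlinarith) (by positivity)

lemma IsGegenbauer.polynomialIntegral_mul_funkHeckeWeight (hC : IsGegenbauer 2 C) (k : ℕ) :
    polynomialIntegral (-1) 1 (C k * funkHeckeWeight) = funkHeckeValue k := by
  have hk : (k : ℝ) + 2 ≠ 0 := by positivity
  have h : 2 * (k + 2) * polynomialIntegral (-1) 1 (C k * funkHeckeWeight) =
      polynomialIntegral (-1) 1 (derivative^[2] (T ℝ (k + 2 : ℤ)) * funkHeckeWeight) := by
    rw [← hC.two_mul_add_two_smul, smul_mul_assoc, map_smul, smul_eq_mul]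
  rw [← mul_right_inj' (mul_ne_zero two_ne_zero hk), h, funkHeckeValue]
  split_ifs with heven
  · rw [polynomialIntegral_iterate_derivative_two_T_mul_funkHeckeWeight_of_even (by grind)]
    push_cast
    ring
  · rw [polynomialIntegral_iterate_derivative_two_T_mul_funkHeckeWeight_of_odd (by grind)]
    push_cast
    field_simp
    ring

end FunkHecke

theorem funk_hecke_coefficients_dimension_six (C : ℕ → Polynomial ℝ)
    (hC : IsGegenbauer 2 C) :
    (∀ k : ℕ,
        1 / (4 * (8 * Real.pi ^ 2 / 3)) * ((k + 3).choose 3 : ℝ) * Lambda6 C k =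
          if Even k then
            -8 * ((k : ℝ) + 2) /
              (((k : ℝ) - 1) * ((k : ℝ) + 1) * ((k : ℝ) + 3) * ((k : ℝ) + 5))
          else
            -8 * ((k : ℝ) + 1) * ((k : ℝ) + 3) /
              ((k : ℝ) * ((k : ℝ) - 2) * ((k : ℝ) + 2) * ((k : ℝ) + 4) * ((k : ℝ) + 6))) ∧
      0 < Lambda6 C 0 ∧ 0 < Lambda6 C 1 ∧ ∀ k : ℕ, 2 ≤ k → Lambda6 C k < 0 := by
  have closed_form (k : ℕ) :
      1 / (4 * (8 * Real.pi ^ 2 / 3)) * ((k + 3).choose 3 : ℝ) * Lambda6 C k = funkHeckeValue k :=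
    (hC.choose_mul_Lambda6 k).trans (hC.polynomialIntegral_mul_funkHeckeWeight k)
  have factor_pos (k : ℕ) : 0 < 1 / (4 * (8 * Real.pi ^ 2 / 3)) * ((k + 3).choose 3 : ℝ) := by
    have := Nat.choose_pos (Nat.le_add_left 3 k)
    positivity
  refine ⟨closed_form, ?_, ?_, fun k hk => ?_⟩
  · refine pos_of_mul_pos_right ?_ (factor_pos 0).le
    rw [closed_form]
    norm_num [funkHeckeValue]
  · refine pos_of_mul_pos_right ?_ (factor_pos 1).le
    rw [closed_form]
    norm_num [funkHeckeValue]
  · refine neg_of_mul_neg_right ?_ (factor_pos k).le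
    rw [closed_form]
    exact funkHeckeValue_neg hk
end
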